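/- Let r ∈ ℤ_{≥0}, λ > −1/2, and let g be a Schwartz function on ℝ. Then the function F_r^λ(g)(v) = (1/(2^{λ+1} Γ(λ+1))) ∫_ℝ e_{2r+1}(uv,λ) g(u) |u|^{2λ+1} du is infinitely differentiable on ℝ, and its odd derivatives at the origin of order below 2r+1 vanish: ∂^{2s+1} F_r^λ(g)(0) = 0 for every s = 0, 1, …, r−1. -/

import Mathlib

open Real MeasureTheory Finset

/-- Normalized Bessel function j_lambda(v). -/
noncomputable def nbessel (l v : ℝ) : ℝ :=
  Real.Gamma (l + 1) *
    ∑' k : ℕ, (-1 : ℝ) ^ k / (Nat.factorial k * Real.Gamma (k + l + 1)) * (v / 2) ^ (2 * k)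

/-- Pochhammer symbol (z)_n = z(z+1)...(z+n-1), with (z)_0 = 1. -/
noncomputable def poch (z : ℝ) (n : ℕ) : ℝ := ∏ i ∈ Finset.range n, (z + i)

/-- The kernel e_{2r+1}(v, lambda). -/
noncomputable def e2r1 (r : ℕ) (l : ℝ) (v : ℝ) : ℂ :=
  (nbessel l v : ℂ) + Complex.I * (-1 : ℂ) ^ (r + 1) *
    ((v ^ (2 * r + 1) / (2 ^ (2 * r + 1) * poch (l + 1) (2 * r + 1)) : ℝ) : ℂ) *
    (nbessel (l + (2 * r + 1)) v : ℂ)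

/-- The non-deformed transform F_r^lambda applied to a function g : ℝ → ℂ. -/
noncomputable def Ftrans (r : ℕ) (l : ℝ) (g : ℝ → ℂ) (v : ℝ) : ℂ :=
  ((1 / (2 ^ (l + 1) * Real.Gamma (l + 1)) : ℝ) : ℂ) *
    ∫ u : ℝ, e2r1 r l (u * v) * g u * ((|u| ^ (2 * l + 1) : ℝ) : ℂ)

/-- The Taylor coefficients of the normalized Bessel function in the variable `(v / 2) ^ 2`. -/
noncomputable def besselCoeff (l : ℝ) (k : ℕ) : ℝ :=
  Real.Gamma (l + 1) * ((-1 : ℝ) ^ k / (Nat.factorial k * Real.Gamma (k + l + 1)))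

/-- The entire function `f` with `nbessel l v = f ((v / 2) ^ 2)`. -/
noncomputable def besselSeries (l x : ℝ) : ℝ := ∑' k : ℕ, besselCoeff l k * x ^ k

lemma nbessel_eq_besselSeries (l v : ℝ) : nbessel l v = besselSeries l ((v / 2) ^ 2) := by
  simp only [nbessel, besselSeries, besselCoeff, ← tsum_mul_left, mul_assoc, pow_mul]

section Coefficients

variable {l : ℝ}

lemma besselCoeff_zero (hl : -1 < l) : besselCoeff l 0 = 1 := by
  have : Real.Gamma (l + 1) ≠ 0 := (Real.Gamma_pos_of_pos (by linarith)).ne'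
  simp [besselCoeff, this]

lemma besselCoeff_succ (hl : -1 < l) (k : ℕ) :
    besselCoeff l (k + 1) = -besselCoeff l k / ((k + 1) * (k + l + 1)) := by
  have hk : (0 : ℝ) < k + l + 1 := by have := k.cast_nonneg (α := ℝ); linarith
  have h1 : Real.Gamma (k + l + 1) ≠ 0 := (Real.Gamma_pos_of_pos hk).ne'
  have h2 : Real.Gamma (↑(k + 1) + l + 1) = (k + l + 1) * Real.Gamma (k + l + 1) := by
    rw [← Real.Gamma_add_one hk.ne']; push_cast; ring_nf
  have h3 : (k.factorial : ℝ) ≠ 0 := by positivity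
  have h4 : (k + 1 : ℝ) ≠ 0 := by positivity
  rw [besselCoeff, besselCoeff, h2, Nat.factorial_succ]
  push_cast
  field_simp
  ring

lemma besselCoeff_add_one (hl : -1 < l) (k : ℕ) :
    (k + l + 1) * besselCoeff (l + 1) k = (l + 1) * besselCoeff l k := by
  have hk : (0 : ℝ) < k + l + 1 := by have := k.cast_nonneg (α := ℝ); linarith
  have h1 : Real.Gamma (k + l + 1) ≠ 0 := (Real.Gamma_pos_of_pos hk).ne'
  have h2 : Real.Gamma (k + (l + 1) + 1) = (k + l + 1) * Real.Gamma (k + l + 1) := by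
    rw [← Real.Gamma_add_one hk.ne']; ring_nf
  have h3 : (k.factorial : ℝ) ≠ 0 := by positivity
  rw [besselCoeff, besselCoeff, h2, Real.Gamma_add_one (by linarith : l + 1 ≠ 0)]
  field_simp

lemma succ_mul_besselCoeff_succ (hl : -1 < l) (k : ℕ) :
    (k + 1) * besselCoeff l (k + 1) = -(1 / (l + 1)) * besselCoeff (l + 1) k := by
  have hk : (0 : ℝ) < k + l + 1 := by have := k.cast_nonneg (α := ℝ); linarith
  have h4 : (k + 1 : ℝ) ≠ 0 := by positivity
  have h5 : l + 1 ≠ 0 := by linarith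
  have h := besselCoeff_add_one hl k
  rw [besselCoeff_succ hl]
  field_simp
  linarith

lemma abs_besselCoeff_le (hl : -(1 / 2) < l) (k : ℕ) :
    |besselCoeff l k| ≤ 2 ^ k / k.factorial := by
  induction k with
  | zero => simp [besselCoeff_zero (show -1 < l by linarith)]
  | succ k ih =>
    have hk : (1 / 2 : ℝ) < k + l + 1 := by have := k.cast_nonneg (α := ℝ); linarith
    have h4 : (0 : ℝ) < k + 1 := by positivity
    rw [besselCoeff_succ (by linarith), abs_div, abs_neg,
      abs_of_pos (show 0 < (k + 1 : ℝ) * (k + l + 1) from mul_pos h4 (by linarith)),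
      Nat.factorial_succ]
    calc |besselCoeff l k| / ((k + 1) * (k + l + 1))
        ≤ (2 ^ k / k.factorial) / ((k + 1) * (1 / 2)) := by gcongr
      _ = 2 ^ (k + 1) / ((k + 1) * k.factorial : ℕ) := by
        push_cast
        field_simp
        ring

lemma summable_besselCoeff_mul_pow (hl : -(1 / 2) < l) (x : ℝ) :
    Summable fun k ↦ besselCoeff l k * x ^ k := by
  refine .of_norm_bounded (Real.summable_pow_div_factorial (2 * |x|)) fun k ↦ ?_
  rw [norm_mul, norm_pow, Real.norm_eq_abs, Real.norm_eq_abs, mul_pow, mul_div_right_comm]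
  gcongr
  exact abs_besselCoeff_le hl k

lemma hasDerivAt_besselSeries_tsum (hl : -(1 / 2) < l) (x : ℝ) :
    HasDerivAt (besselSeries l) (∑' k : ℕ, besselCoeff l k * (k * x ^ (k - 1))) x := by
  have hx : x ∈ Metric.ball (0 : ℝ) (|x| + 1) := by simp
  refine hasDerivAt_tsum_of_isPreconnected
    (Real.summable_pow_div_factorial (4 * (|x| + 1))) Metric.isOpen_ball
    (convex_ball _ _).isPreconnected (fun k y _ ↦ (hasDerivAt_pow k y).const_mul _)
    (fun k y hy ↦ ?_) hx (summable_besselCoeff_mul_pow hl x) hx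
  have hy' : |y| ≤ |x| + 1 := by simpa using (Metric.mem_ball.1 hy).le
  have hk : (k : ℝ) ≤ 2 ^ k := by exact_mod_cast Nat.lt_two_pow_self.le
  have h1 : |y| ^ (k - 1) ≤ (|x| + 1) ^ k :=
    (pow_le_pow_left₀ (abs_nonneg y) hy' _).trans
      (pow_le_pow_right₀ (by linarith [abs_nonneg x]) (Nat.sub_le k 1))
  calc ‖besselCoeff l k * (k * y ^ (k - 1))‖
      = |besselCoeff l k| * (k * |y| ^ (k - 1)) := by simp
    _ ≤ 2 ^ k / k.factorial * (2 ^ k * (|x| + 1) ^ k) := by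
      gcongr
      exact abs_besselCoeff_le hl k
    _ = (4 * (|x| + 1)) ^ k / k.factorial := by
      rw [mul_pow, show (4 : ℝ) = 2 * 2 by norm_num, mul_pow]
      ring

lemma hasDerivAt_besselSeries (hl : -(1 / 2) < l) (x : ℝ) :
    HasDerivAt (besselSeries l) (-(1 / (l + 1)) * besselSeries (l + 1) x) x := by
  have hs : Summable fun k : ℕ ↦ besselCoeff l k * (k * x ^ (k - 1)) := by
    rw [← summable_nat_add_iff 1]
    refine ((summable_besselCoeff_mul_pow (l := l + 1) (by linarith) x).mul_left
      (-(1 / (l + 1)))).congr fun k ↦ ?_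
    rw [← mul_assoc, ← succ_mul_besselCoeff_succ (by linarith)]
    rw [Nat.add_sub_cancel]
    push_cast
    ring
  convert hasDerivAt_besselSeries_tsum hl x using 1
  rw [hs.tsum_eq_zero_add, besselSeries, ← tsum_mul_left]
  simp only [Nat.cast_zero, zero_mul, mul_zero, zero_add]
  refine tsum_congr fun k ↦ ?_
  rw [← mul_assoc, ← succ_mul_besselCoeff_succ (by linarith)]
  rw [Nat.add_sub_cancel]
  push_cast
  ring

lemma besselSeries_recurrence (hl : -(1 / 2) < l) (x : ℝ) :
    x * (-(1 / (l + 2)) * besselSeries (l + 2) x) + (l + 1) * besselSeries (l + 1) x =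
      (l + 1) * besselSeries l x := by
  have hl1 : -(1 / 2) < l + 1 := by linarith
  have hd := (hasDerivAt_besselSeries hl1 x).unique (hasDerivAt_besselSeries_tsum hl1 x)
  rw [show l + 1 + 1 = l + 2 by ring] at hd
  have h0 := summable_besselCoeff_mul_pow hl x
  have h1 := summable_besselCoeff_mul_pow hl1 x
  have key (k : ℕ) : x * (besselCoeff (l + 1) k * (k * x ^ (k - 1))) =
      (l + 1) * (besselCoeff l k * x ^ k) - (l + 1) * (besselCoeff (l + 1) k * x ^ k) := by
    have hx : (k : ℝ) * (x * x ^ (k - 1)) = k * x ^ k := by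
      cases k with
      | zero => simp
      | succ k => simp only [Nat.add_sub_cancel, pow_succ']
    linear_combination besselCoeff (l + 1) k * hx +
      x ^ k * besselCoeff_add_one (show -1 < l by linarith) k
  rw [hd, ← tsum_mul_left, tsum_congr key, (h0.mul_left _).tsum_sub (h1.mul_left _),
    tsum_mul_left, tsum_mul_left, besselSeries, besselSeries]
  ring

end Coefficients

section NormalizedBessel

variable {l : ℝ}

lemma nbessel_neg (l v : ℝ) : nbessel l (-v) = nbessel l v := by
  simp [nbessel_eq_besselSeries, neg_div]

lemma nbessel_zero (hl : -1 < l) : nbessel l 0 = 1 := by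
  rw [nbessel_eq_besselSeries, besselSeries, tsum_eq_single 0 fun k hk ↦ by simp [hk]]
  simp [besselCoeff_zero hl]

lemma hasDerivAt_nbessel (hl : -(1 / 2) < l) (v : ℝ) :
    HasDerivAt (nbessel l) (-(v / (2 * (l + 1))) * nbessel (l + 1) v) v := by
  have h : HasDerivAt (fun v : ℝ ↦ (v / 2) ^ 2) (v / 2) v := by
    refine (((hasDerivAt_id' v).div_const 2).fun_pow 2).congr_deriv ?_
    push_cast
    ring
  have := (hasDerivAt_besselSeries hl ((v / 2) ^ 2)).comp v h
  rw [nbessel_eq_besselSeries, show nbessel l = besselSeries l ∘ fun v : ℝ ↦ (v / 2) ^ 2 from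
    funext (nbessel_eq_besselSeries l)]
  refine this.congr_deriv ?_
  have h5 : l + 1 ≠ 0 := by linarith
  field_simp

lemma continuous_nbessel (hl : -(1 / 2) < l) : Continuous (nbessel l) :=
  continuous_iff_continuousAt.2 fun v ↦ (hasDerivAt_nbessel hl v).continuousAt

lemma nbessel_recurrence (hl : -(1 / 2) < l) (v : ℝ) :
    v * (-(v / (2 * (l + 2))) * nbessel (l + 2) v) + 2 * (l + 1) * nbessel (l + 1) v =
      2 * (l + 1) * nbessel l v := by
  simp only [nbessel_eq_besselSeries]
  have h5 : l + 2 ≠ 0 := by linarith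
  rw [mul_assoc, mul_assoc 2 (l + 1), ← besselSeries_recurrence hl]
  field_simp

/-- The sum of the squares of `nbessel l` and of its derivative is nonincreasing on `[0, ∞)`. -/
lemma antitoneOn_nbessel_energy (hl : -(1 / 2) < l) :
    AntitoneOn (fun v ↦ nbessel l v ^ 2 + (v / (2 * (l + 1)) * nbessel (l + 1) v) ^ 2)
      (Set.Ici 0) := by
  have h5 : 0 < l + 1 := by linarith
  have hd (v : ℝ) : HasDerivAt
      (fun v ↦ nbessel l v ^ 2 + (v / (2 * (l + 1)) * nbessel (l + 1) v) ^ 2)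
      (-(2 * v * (2 * l + 1) / (2 * (l + 1)) ^ 2 * nbessel (l + 1) v ^ 2)) v := by
    have h1 := (hasDerivAt_nbessel hl v).pow 2
    have h2 := ((((hasDerivAt_id v).div_const (2 * (l + 1))).mul
      (hasDerivAt_nbessel (l := l + 1) (by linarith) v))).pow 2
    refine (h1.add h2).congr_deriv ?_
    have h3 := nbessel_recurrence hl v
    rw [show l + 1 + 1 = l + 2 by ring]
    simp only [id, Pi.mul_apply, Nat.cast_ofNat, Nat.add_one_sub_one, pow_one]
    have h4 : v * (-(v / (2 * (l + 2))) * nbessel (l + 2) v) =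
      2 * (l + 1) * nbessel l v - 2 * (l + 1) * nbessel (l + 1) v := by linarith
    have h6 : v / (2 * (l + 1)) * (-(v / (2 * (l + 2))) * nbessel (l + 2) v) =
        nbessel l v - nbessel (l + 1) v := by
      rw [div_mul_eq_mul_div, h4]
      field_simp
    rw [h6]
    field_simp
    ring
  refine antitoneOn_of_deriv_nonpos (convex_Ici 0)
    (fun v _ ↦ (hd v).continuousAt.continuousWithinAt)
    (fun v _ ↦ (hd v).differentiableAt.differentiableWithinAt) fun v hv ↦ ?_
  rw [interior_Ici, Set.mem_Ioi] at hv
  rw [(hd v).deriv, neg_nonpos]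
  have : 0 < 2 * l + 1 := by linarith
  positivity

lemma abs_nbessel_le_one (hl : -(1 / 2) < l) (v : ℝ) : |nbessel l v| ≤ 1 := by
  wlog hv : 0 ≤ v generalizing v
  · rw [← nbessel_neg]
    exact this (-v) (by linarith)
  have := antitoneOn_nbessel_energy hl Set.self_mem_Ici hv hv
  simp only [nbessel_zero (show -1 < l by linarith), zero_div, zero_mul] at this
  rw [← sq_le_one_iff_abs_le_one]
  nlinarith [sq_nonneg (v / (2 * (l + 1)) * nbessel (l + 1) v)]

end NormalizedBessel

section Transform

variable {l : ℝ} {h : ℝ → ℂ}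

lemma integrable_nbessel_mul (hl : -(1 / 2) < l) (hh : Integrable h) (v : ℝ) :
    Integrable fun u : ℝ ↦ (nbessel l (u * v) : ℂ) * h u := by
  refine hh.bdd_mul (c := 1) ?_ (.of_forall fun u ↦ ?_)
  · have := continuous_nbessel hl
    exact Continuous.aestronglyMeasurable (by fun_prop)
  · simpa using abs_nbessel_le_one hl (u * v)

lemma hasDerivAt_integral_nbessel_mul (hl : -(1 / 2) < l) (hh : Integrable h)
    (hh2 : Integrable fun u : ℝ ↦ (u : ℂ) ^ 2 * h u) (v : ℝ) :
    HasDerivAt (fun v : ℝ ↦ ∫ u : ℝ, (nbessel l (u * v) : ℂ) * h u)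
      (((-(v / (2 * (l + 1))) : ℝ) : ℂ) *
        ∫ u : ℝ, (nbessel (l + 1) (u * v) : ℂ) * ((u : ℂ) ^ 2 * h u)) v := by
  have hl1 : -(1 / 2) < l + 1 := by linarith
  have h5 : 0 < l + 1 := by linarith
  rw [← integral_const_mul]
  refine (hasDerivAt_integral_of_dominated_loc_of_deriv_le (Metric.ball_mem_nhds v one_pos)
    (F' := fun w (u : ℝ) ↦ ((-(w / (2 * (l + 1))) : ℝ) : ℂ) *
      ((nbessel (l + 1) (u * w) : ℂ) * ((u : ℂ) ^ 2 * h u)))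
    (bound := fun u : ℝ ↦ (|v| + 1) / (2 * (l + 1)) * ‖(u : ℂ) ^ 2 * h u‖)
    (.of_forall fun w ↦ (integrable_nbessel_mul hl hh w).aestronglyMeasurable)
    (integrable_nbessel_mul hl hh v)
    ((integrable_nbessel_mul hl1 hh2 v).const_mul _).aestronglyMeasurable
    (.of_forall fun u w hw ↦ ?_) (hh2.norm.const_mul _) (.of_forall fun u w _ ↦ ?_)).2
  · have hw' : |w| ≤ |v| + 1 := by
      have h1 := abs_sub_abs_le_abs_sub w v
      have h2 := Metric.mem_ball.1 hw
      rw [Real.dist_eq] at h2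
      linarith
    rw [norm_mul, norm_mul, Complex.norm_real, Complex.norm_real, norm_neg, norm_div,
      Real.norm_eq_abs, Real.norm_eq_abs, Real.norm_eq_abs,
      abs_of_pos (show 0 < 2 * (l + 1) by linarith)]
    gcongr
    exact mul_le_of_le_one_left (norm_nonneg _) (abs_nbessel_le_one hl1 _)
  · have h1 : HasDerivAt (fun w ↦ nbessel l (u * w))
        (-(u * w / (2 * (l + 1))) * nbessel (l + 1) (u * w) * u) w := by
      refine (hasDerivAt_nbessel hl (u * w)).comp w ?_
      simpa using (hasDerivAt_id w).const_mul u
    refine (h1.ofReal_comp.mul_const (h u)).congr_deriv ?_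
    push_cast
    ring

lemma contDiff_integral_nbessel_mul (hl : -(1 / 2) < l)
    (hh : ∀ k : ℕ, Integrable fun u : ℝ ↦ (u : ℂ) ^ k * h u) :
    ContDiff ℝ (⊤ : ℕ∞) fun v : ℝ ↦ ∫ u : ℝ, (nbessel l (u * v) : ℂ) * h u := by
  refine contDiff_infty.2 fun n ↦ ?_
  induction n generalizing l h with
  | zero =>
    exact contDiff_zero.2 <| continuous_iff_continuousAt.2 fun v ↦
      (hasDerivAt_integral_nbessel_mul hl (by simpa using hh 0) (hh 2) v).continuousAt
  | succ n ih =>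
    have hd := hasDerivAt_integral_nbessel_mul hl (by simpa using hh 0) (hh 2)
    push_cast
    refine contDiff_succ_iff_deriv.2 ⟨fun v ↦ (hd v).differentiableAt, by simp, ?_⟩
    rw [funext fun v ↦ (hd v).deriv]
    refine ContDiff.mul ?_ (ih (by linarith) fun k ↦ ?_)
    · exact Complex.ofRealCLM.contDiff.comp (contDiff_id.div_const _).neg
    · simpa only [← mul_assoc, ← pow_add] using hh (k + 2)

lemma integrable_pow_mul_schwartz_mul_abs_rpow (g : SchwartzMap ℝ ℂ) {a : ℝ} (ha : 0 ≤ a)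
    (k : ℕ) : Integrable fun u : ℝ ↦ (u : ℂ) ^ k * (g u * ((|u| ^ a : ℝ) : ℂ)) := by
  obtain ⟨N, hN⟩ := exists_nat_ge a
  refine ((g.integrable_pow_mul volume k).add (g.integrable_pow_mul volume (k + N))).mono' ?_
    (.of_forall fun u ↦ ?_)
  · have hc : Continuous fun u : ℝ ↦ |u| ^ a := continuous_abs.rpow_const fun _ ↦ .inr ha
    have := g.continuous
    exact Continuous.aestronglyMeasurable (by fun_prop)
  · have hu : |u| ^ a ≤ 1 + |u| ^ N := by
      rcases le_total |u| 1 with h1 | h1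
      · have := Real.rpow_le_one (abs_nonneg u) h1 ha
        have : 0 ≤ |u| ^ N := by positivity
        linarith
      · have := Real.rpow_le_rpow_of_exponent_le h1 hN
        rw [Real.rpow_natCast] at this
        linarith
    have hn : 0 ≤ |u| ^ a := by positivity
    simp only [norm_mul, norm_pow, Complex.norm_real, Real.norm_eq_abs, abs_of_nonneg hn,
      Pi.add_apply]
    calc |u| ^ k * (‖g u‖ * |u| ^ a) ≤ |u| ^ k * (‖g u‖ * (1 + |u| ^ N)) := by gcongr
      _ = |u| ^ k * ‖g u‖ + |u| ^ (k + N) * ‖g u‖ := by ring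

end Transform

lemma iteratedDeriv_odd_eq_zero_of_even {f : ℝ → ℂ} (hf : ∀ v, f (-v) = f v) {n : ℕ}
    (hn : Odd n) : iteratedDeriv n f 0 = 0 := by
  have := iteratedDeriv_comp_neg n f 0
  simp only [hf, neg_zero, hn.neg_one_pow, neg_smul, one_smul] at this
  exact self_eq_neg.1 this

lemma iteratedDeriv_pow_mul_eq_zero {f : ℝ → ℂ} (hf : ContDiff ℝ (⊤ : ℕ∞) f) {n m : ℕ}
    (hnm : n < m) : iteratedDeriv n (fun v : ℝ ↦ (v : ℂ) ^ m * f v) 0 = 0 := by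
  induction n generalizing m f with
  | zero => simp [(show m ≠ 0 by omega)]
  | succ n ih =>
    obtain ⟨m, rfl⟩ : ∃ m', m = m' + 1 := ⟨m - 1, by omega⟩
    have hf' := contDiff_infty_iff_deriv.1 hf
    have hd : deriv (fun v : ℝ ↦ (v : ℂ) ^ (m + 1) * f v) =
        fun v : ℝ ↦ (v : ℂ) ^ m * ((m + 1) * f v + v * deriv f v) := by
      funext v
      have h1 : HasDerivAt (fun v : ℝ ↦ (v : ℂ) ^ (m + 1)) ((m + 1) * (v : ℂ) ^ m) v := by
        simpa using (hasDerivAt_id v).ofReal_comp.fun_pow (m + 1)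
      rw [(h1.fun_mul (hf'.1 v).hasDerivAt).deriv]
      ring
    rw [iteratedDeriv_succ', hd]
    refine ih (ContDiff.add (contDiff_const.mul hf) (ContDiff.mul ?_ hf'.2)) (by omega)
    exact Complex.ofRealCLM.contDiff

lemma Ftrans_eq (r : ℕ) {l : ℝ} (hl : -(1 / 2) < l) (g : SchwartzMap ℝ ℂ) :
    ∃ c d : ℂ, Ftrans r l g = fun v : ℝ ↦
      c * (∫ u : ℝ, (nbessel l (u * v) : ℂ) * (g u * ((|u| ^ (2 * l + 1) : ℝ) : ℂ))) +
      d * ((v : ℂ) ^ (2 * r + 1) * ∫ u : ℝ, (nbessel (l + (2 * r + 1)) (u * v) : ℂ) *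
        ((u : ℂ) ^ (2 * r + 1) * (g u * ((|u| ^ (2 * l + 1) : ℝ) : ℂ)))) := by
  set C : ℂ := ((1 / (2 ^ (l + 1) * Real.Gamma (l + 1)) : ℝ) : ℂ) with hC
  set D : ℂ := Complex.I * (-1 : ℂ) ^ (r + 1) *
    ((1 / (2 ^ (2 * r + 1) * poch (l + 1) (2 * r + 1)) : ℝ) : ℂ) with hD
  have hi := integrable_pow_mul_schwartz_mul_abs_rpow g (show 0 ≤ 2 * l + 1 by linarith)
  have hr : (0 : ℝ) ≤ 2 * r + 1 := by positivity
  refine ⟨C, C * D, funext fun v ↦ ?_⟩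
  rw [Ftrans, ← hC, mul_assoc C, ← mul_add, ← mul_assoc D,
    ← integral_const_mul (D * (v : ℂ) ^ (2 * r + 1)),
    ← integral_add (integrable_nbessel_mul hl (by simpa using hi 0) v)
      ((integrable_nbessel_mul (by linarith) (hi (2 * r + 1)) v).const_mul _)]
  congr 2
  funext u
  simp only [e2r1, hD]
  push_cast
  ring

/-- for a Schwartz function g, F_r^lambda(g) is infinitely differentiable
and its odd derivatives of order below 2r+1 vanish at the origin. -/
theorem stmt17 (r : ℕ) (l : ℝ) (hl : -(1 / 2 : ℝ) < l) (g : SchwartzMap ℝ ℂ) :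
    ContDiff ℝ (⊤ : ℕ∞) (Ftrans r l ⇑g) ∧
    ∀ s : ℕ, s < r → iteratedDeriv (2 * s + 1) (Ftrans r l ⇑g) 0 = 0 := by
  obtain ⟨c, d, hF⟩ := Ftrans_eq r hl g
  have hi := integrable_pow_mul_schwartz_mul_abs_rpow g (show 0 ≤ 2 * l + 1 by linarith)
  have hr : (0 : ℝ) ≤ 2 * r + 1 := by positivity
  have hE := contDiff_integral_nbessel_mul hl hi
  have hG := contDiff_integral_nbessel_mul (l := l + (2 * r + 1)) (by linarith)
    (h := fun u : ℝ ↦ (u : ℂ) ^ (2 * r + 1) * (g u * ((|u| ^ (2 * l + 1) : ℝ) : ℂ)))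
    fun k ↦ by simpa only [← mul_assoc, ← pow_add] using hi (k + (2 * r + 1))
  have hE' : ContDiff ℝ (⊤ : ℕ∞) _ := (contDiff_const (c := c)).mul hE
  have hG' : ContDiff ℝ (⊤ : ℕ∞) fun v : ℝ ↦ d * ((v : ℂ) ^ (2 * r + 1) * _) :=
    contDiff_const.mul ((Complex.ofRealCLM.contDiff.pow (2 * r + 1)).mul hG)
  rw [hF]
  refine ⟨hE'.add hG', fun s hs ↦ ?_⟩
  have h1 := iteratedDeriv_odd_eq_zero_of_even (n := 2 * s + 1)
    (f := fun v : ℝ ↦ ∫ u : ℝ, (nbessel l (u * v) : ℂ) * (g u * ((|u| ^ (2 * l + 1) : ℝ) : ℂ)))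
    (fun v ↦ by simp only [mul_neg, nbessel_neg]) ⟨s, rfl⟩
  have h2 := iteratedDeriv_pow_mul_eq_zero hG (show 2 * s + 1 < 2 * r + 1 by omega)
  rw [iteratedDeriv_fun_add (contDiff_infty.1 hE' _).contDiffAt
    (contDiff_infty.1 hG' _).contDiffAt, iteratedDeriv_const_mul_field,
    iteratedDeriv_const_mul_field, h1, h2, mul_zero, mul_zero, add_zero]
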